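/- arXiv:2011.01178 — 8 statements merged into one kernel-verified Lean document; each statement's English description precedes it below -/
import Mathlib

section
/- For every preference profile and every nonempty linearly constrained feasible set ΔC, there exists a feasible random assignment x ∈ ΔC that is simultaneously constrained ordinally efficient and envy-free among agents of the same type. -/
open Finset
open scoped Classical

/-- `x` is a random assignment: probabilities in `[0,1]`, each agent's row sums to `1`,
and each object's column sum is at most its quota. -/
def IsRandomAssignment {N O : Type*} [Fintype N] [Fintype O]
    (q : O → ℕ) (x : N → O → ℝ) : Prop :=
  (∀ i o, 0 ≤ x i o ∧ x i o ≤ 1) ∧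
  (∀ i : N, ∑ o, x i o = 1) ∧
  (∀ o : O, ∑ i, x i o ≤ (q o : ℝ))

/-- Cumulative share of objects weakly preferred (w.r.t. `pref`) to `o` in allocation `xi`. -/
noncomputable def upperSum {O : Type*} [Fintype O]
    (pref : O → O → Prop) (xi : O → ℝ) (o : O) : ℝ :=
  ∑ o' ∈ Finset.univ.filter (fun o' => pref o' o), xi o'

/-- `xi` (first-order) stochastically dominates `yi` with respect to `pref`. -/
def SDom {O : Type*} [Fintype O] (pref : O → O → Prop) (xi yi : O → ℝ) : Prop :=
  ∀ o, upperSum pref yi o ≤ upperSum pref xi o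

/-- Strict stochastic dominance. -/
def StrictSDom {O : Type*} [Fintype O] (pref : O → O → Prop) (xi yi : O → ℝ) : Prop :=
  SDom pref xi yi ∧ ∃ o, upperSum pref yi o < upperSum pref xi o

/-- Feasibility: random assignment satisfying the linear constraints `A x ≤ b`. -/
def Feasible {N O : Type*} [Fintype N] [Fintype O]
    (q : O → ℕ) {m : ℕ} (A : Fin m → N → O → ℝ) (b : Fin m → ℝ)
    (x : N → O → ℝ) : Prop :=
  IsRandomAssignment q x ∧ ∀ c, ∑ i, ∑ o, A c i o * x i o ≤ b c

/-- Agents `i` and `j` are of the same type w.r.t. the constraint matrix `A`. -/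
def SameType {N O : Type*} {m : ℕ} (A : Fin m → N → O → ℝ) (i j : N) : Prop :=
  ∀ c o, A c i o = A c j o


/-- Lexicographic maximization of finitely many continuous functions on a compact set. -/
theorem lexmax_exists {X : Type*} [TopologicalSpace X] (f : ℕ → X → ℝ)
    (hf : ∀ k, Continuous (f k)) (S : Set X) (hS : IsCompact S) (hne : S.Nonempty) (n : ℕ) :
    ∃ T : Set X, T ⊆ S ∧ IsCompact T ∧ T.Nonempty ∧ ∀ u ∈ T, ∀ v ∈ S, ∀ k < n,
      (∀ l ≤ k, f l u ≤ f l v) → f k v ≤ f k u := by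
  suffices h : ∃ T : Set X, T ⊆ S ∧ IsCompact T ∧ T.Nonempty ∧
      (∀ u ∈ T, ∀ v ∈ S, (∀ l < n, f l u ≤ f l v) → v ∈ T) ∧ ∀ u ∈ T, ∀ v ∈ S, ∀ k < n,
      (∀ l ≤ k, f l u ≤ f l v) → f k v ≤ f k u by
    obtain ⟨T, h1, h2, h3, _, h5⟩ := h
    exact ⟨T, h1, h2, h3, h5⟩
  induction n with
  | zero => exact ⟨S, subset_rfl, hS, hne, by simp, by simp⟩
  | succ n ih =>
    obtain ⟨T, h1, h2, h3, h4, h5⟩ := ih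
    obtain ⟨w, hw, hmax⟩ := h2.exists_isMaxOn h3 (hf n).continuousOn
    have hmax : ∀ v ∈ T, f n v ≤ f n w := hmax
    refine ⟨T ∩ {v | f n w ≤ f n v}, fun v hv => h1 hv.1,
      h2.inter_right (isClosed_le continuous_const (hf n)), ⟨w, hw, le_refl (f n w)⟩, ?_, ?_⟩
    · rintro u ⟨hu, hu'⟩ v hv hl
      exact ⟨h4 u hu v hv (fun l hln => hl l (by omega)), le_trans hu' (hl n (by omega))⟩
    · rintro u ⟨hu, hu'⟩ v hv k hk hl
      rcases Nat.lt_succ_iff_lt_or_eq.mp hk with hk | rfl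
      · exact h5 u hu v hv k hk hl
      · exact le_trans (hmax v (h4 u hu v hv (fun l hln => hl l hln.le))) hu'

/-- Sum of the `k` smallest coordinates. -/
noncomputable def sumSmallest {ι : Type*} [Fintype ι] (k : ℕ) (u : ι → ℝ) : ℝ :=
  if h : (Finset.powersetCard k (Finset.univ : Finset ι)).Nonempty then
    (Finset.powersetCard k (Finset.univ : Finset ι)).inf' h (fun T => ∑ a ∈ T, u a) else 0

theorem sumSmallest_continuous {ι : Type*} [Fintype ι] (k : ℕ) :
    Continuous (sumSmallest k : (ι → ℝ) → ℝ) := by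
  unfold sumSmallest
  split_ifs with h
  · apply Continuous.finset_inf'_apply
    intro T _
    fun_prop
  · exact continuous_const

theorem sumSmallest_le {ι : Type*} [Fintype ι] (u : ι → ℝ) (T : Finset ι) :
    sumSmallest T.card u ≤ ∑ a ∈ T, u a := by
  have hT : T ∈ Finset.powersetCard T.card (Finset.univ : Finset ι) := by simp
  unfold sumSmallest
  rw [dif_pos ⟨T, hT⟩]
  exact Finset.inf'_le (fun T => ∑ a ∈ T, u a) hT

theorem sumSmallest_attained {ι : Type*} [Fintype ι] (u : ι → ℝ) (k : ℕ)
    (hk : k ≤ Fintype.card ι) : ∃ T : Finset ι, T.card = k ∧ sumSmallest k u = ∑ a ∈ T, u a := by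
  have h : (Finset.powersetCard k (Finset.univ : Finset ι)).Nonempty := by
    rw [Finset.powersetCard_nonempty]; simpa using hk
  obtain ⟨T, hT, he⟩ := Finset.exists_mem_eq_inf' h (fun T => ∑ a ∈ T, u a)
  refine ⟨T, (Finset.mem_powersetCard.mp hT).2, ?_⟩
  unfold sumSmallest
  rw [dif_pos h, he]

theorem exchange_le {ι : Type*} (u v : ι → ℝ) (t : ℝ) (L T T' : Finset ι)
    (hT' : T' ⊆ L) (hsub : T ∩ L ⊆ T') (hcard : T'.card = T.card)
    (h1 : ∀ a ∈ L, u a ≤ t) (h2 : ∀ a ∈ L, u a ≤ v a) (h3 : ∀ a ∉ L, t < v a) :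
    ∑ a ∈ T', u a ≤ ∑ a ∈ T, v a ∧ (T' ≠ T → ∑ a ∈ T', u a < ∑ a ∈ T, v a) := by
  have e1 : ∑ a ∈ T', u a = ∑ a ∈ T ∩ L, u a + ∑ a ∈ T' \ (T ∩ L), u a := by
    rw [add_comm, Finset.sum_sdiff hsub]
  have e2 : ∑ a ∈ T, v a = ∑ a ∈ T ∩ L, v a + ∑ a ∈ T \ (T ∩ L), v a := by
    rw [add_comm, Finset.sum_sdiff Finset.inter_subset_left]
  have c1 := Finset.card_sdiff_add_card_eq_card hsub
  have c2 := Finset.card_sdiff_add_card_eq_card (Finset.inter_subset_left : T ∩ L ⊆ T)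
  have hc : (T' \ (T ∩ L)).card = (T \ (T ∩ L)).card := by omega
  have b1 : ∑ a ∈ T ∩ L, u a ≤ ∑ a ∈ T ∩ L, v a :=
    Finset.sum_le_sum fun a ha => h2 a (Finset.mem_inter.mp ha).2
  have b2 : ∑ a ∈ T' \ (T ∩ L), u a ≤ (T' \ (T ∩ L)).card • t :=
    Finset.sum_le_card_nsmul _ _ _ fun a ha => h1 a (hT' (Finset.mem_sdiff.mp ha).1)
  have hout : ∀ a ∈ T \ (T ∩ L), t < v a := fun a ha => h3 a (by
    simp only [Finset.mem_sdiff, Finset.mem_inter] at ha; tauto)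
  have b3 : (T \ (T ∩ L)).card • t ≤ ∑ a ∈ T \ (T ∩ L), v a :=
    Finset.card_nsmul_le_sum _ _ _ fun a ha => (hout a ha).le
  rw [hc] at b2
  refine ⟨by linarith, fun hne => ?_⟩
  have hnon : (T \ (T ∩ L)).Nonempty := by
    rw [Finset.nonempty_iff_ne_empty]
    intro h0
    have hTL : T ⊆ T' := (Finset.sdiff_eq_empty_iff_subset.mp h0).trans hsub
    exact hne (Finset.eq_of_subset_of_card_le hTL hcard.le).symm
  have b4 : (T \ (T ∩ L)).card • t < ∑ a ∈ T \ (T ∩ L), v a := by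
    rw [← Finset.sum_const]
    exact Finset.sum_lt_sum_of_nonempty hnon hout
  linarith

/-- An improvement at level `t` contradicts leximin-maximality. -/
theorem leximin_no_improve {ι : Type*} [Fintype ι] (u v : ι → ℝ)
    (hmax : ∀ k < Fintype.card ι + 1,
      (∀ l ≤ k, sumSmallest l u ≤ sumSmallest l v) → sumSmallest k v ≤ sumSmallest k u)
    (t : ℝ) (h2 : ∀ a, u a ≤ t → u a ≤ v a) (h3 : ∀ a, t < u a → t < v a)
    (h4 : ∃ a, u a ≤ t ∧ u a < v a) : False := by
  set L : Finset ι := Finset.univ.filter (fun a => u a ≤ t) with hL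
  have m1 : ∀ a ∈ L, u a ≤ t := fun a ha => by simpa [hL] using ha
  have m2 : ∀ a ∈ L, u a ≤ v a := fun a ha => h2 a (m1 a ha)
  have m3 : ∀ a ∉ L, t < v a := fun a ha => h3 a (by simpa [hL] using ha)
  have hLc : L.card ≤ Fintype.card ι := Finset.card_le_univ L
  have weak : ∀ l ≤ L.card, sumSmallest l u ≤ sumSmallest l v := by
    intro l hl
    obtain ⟨T, hT, he⟩ := sumSmallest_attained v l (hl.trans hLc)
    obtain ⟨T', hs1, hs2, hc⟩ := Finset.exists_subsuperset_card_eq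
      (Finset.inter_subset_right : T ∩ L ⊆ L)
      ((Finset.card_le_card Finset.inter_subset_left).trans hT.le) hl
    rw [he]
    calc sumSmallest l u ≤ ∑ a ∈ T', u a := by rw [← hc]; exact sumSmallest_le u T'
      _ ≤ _ := (exchange_le u v t L T T' hs2 hs1 (hc.trans hT.symm) m1 m2 m3).1
  have hle := hmax L.card (by omega) weak
  obtain ⟨T, hT, he⟩ := sumSmallest_attained v L.card hLc
  have hu := sumSmallest_le u L
  by_cases hTL : L = T
  · subst hTL
    obtain ⟨a, ha, hlt⟩ := h4
    have := Finset.sum_lt_sum m2 ⟨a, by simpa [hL] using ha, hlt⟩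
    linarith
  · have := (exchange_le u v t L T L subset_rfl Finset.inter_subset_right hT.symm m1 m2 m3).2 hTL
    linarith

theorem feasible_compact {N O : Type*} [Fintype N] [Fintype O]
    (q : O → ℕ) {m : ℕ} (A : Fin m → N → O → ℝ) (b : Fin m → ℝ) :
    IsCompact {x : N → O → ℝ | Feasible q A b x} := by
  have hK : IsCompact (Set.Icc (0 : N → O → ℝ) 1) := isCompact_Icc
  refine hK.of_isClosed_subset ?_ ?_
  · simp only [Feasible, IsRandomAssignment, Set.ofPred_and, Set.ofPred_forall]
    refine IsClosed.inter (IsClosed.inter ?_ (IsClosed.inter ?_ ?_)) ?_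
    · refine isClosed_iInter fun i => isClosed_iInter fun o => IsClosed.inter ?_ ?_
      · exact isClosed_le (by fun_prop) (by fun_prop)
      · exact isClosed_le (by fun_prop) (by fun_prop)
    · exact isClosed_iInter fun i => isClosed_eq (by fun_prop) (by fun_prop)
    · exact isClosed_iInter fun i => isClosed_le (by fun_prop) (by fun_prop)
    · exact isClosed_iInter fun i => isClosed_le (by fun_prop) (by fun_prop)
  · intro x hx
    exact ⟨fun i o => (hx.1.1 i o).1, fun i o => (hx.1.1 i o).2⟩

theorem exists_worst {O : Type*} (r : O → O → Prop) (hc : ∀ a b, r a b ∨ r b a)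
    (ht : ∀ a b c, r a b → r b c → r a c) (S : Finset O) (hS : S.Nonempty) :
    ∃ w ∈ S, ∀ a ∈ S, r a w := by
  induction hS using Finset.Nonempty.cons_induction with
  | singleton a => exact ⟨a, by simp, by simpa using (hc a a).elim id id⟩
  | cons a s h hs ih =>
    obtain ⟨w, hw, hall⟩ := ih
    rcases hc a w with h1 | h1
    · exact ⟨w, by simp [hw], by simpa using ⟨h1, hall⟩⟩
    · refine ⟨a, by simp, ?_⟩
      simpa using ⟨(hc a a).elim id id, fun c hcs => ht c w a (hall c hcs) h1⟩

/-- The trade: agent `i` gives `δ` of `o2` to `j` in exchange for `δ` of `o1`. -/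
noncomputable def trade {N O : Type*} (x : N → O → ℝ) (i j : N) (o1 o2 : O) (δ : ℝ) :
    N → O → ℝ := fun k o => x k o +
  δ * ((if k = i then 1 else 0) - (if k = j then 1 else 0)) *
    ((if o = o1 then 1 else 0) - (if o = o2 then 1 else 0))

theorem trade_upperSum {N O : Type*} [Fintype O] (r : O → O → Prop) (x : N → O → ℝ) (i j : N)
    (o1 o2 : O) (δ : ℝ) (k : N) (p : O) :
    upperSum r (trade x i j o1 o2 δ k) p = upperSum r (x k) p +
      δ * ((if k = i then 1 else 0) - (if k = j then 1 else 0)) *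
        ((if r o1 p then 1 else 0) - (if r o2 p then 1 else 0)) := by
  unfold upperSum trade
  rw [Finset.sum_add_distrib, ← Finset.mul_sum, Finset.sum_sub_distrib]
  simp [Finset.sum_ite_eq']

theorem trade_feasible {N O : Type*} [Fintype N] [Fintype O]
    (q : O → ℕ) {m : ℕ} (A : Fin m → N → O → ℝ) (b : Fin m → ℝ) (x : N → O → ℝ)
    (hx : Feasible q A b x) (i j : N) (hij : i ≠ j) (hty : SameType A i j) (o1 o2 : O)
    (δ : ℝ) (hδ : 0 ≤ δ) (h1 : δ ≤ x j o1) (h2 : δ ≤ x i o2) :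
    Feasible q A b (trade x i j o1 o2 δ) := by
  obtain ⟨⟨hb, hr, hcol⟩, hA⟩ := hx
  have hnn : ∀ k o, 0 ≤ trade x i j o1 o2 δ k o := by
    intro k o
    have h0 := (hb k o).1
    unfold trade
    by_cases hki : k = i <;> by_cases hkj : k = j <;> by_cases ho1 : o = o1 <;>
      by_cases ho2 : o = o2 <;> simp_all <;> linarith [(hb i o1).1, (hb j o2).1]
  have hrow : ∀ k, ∑ o, trade x i j o1 o2 δ k o = 1 := by
    intro k
    unfold trade
    rw [Finset.sum_add_distrib, ← Finset.mul_sum, Finset.sum_sub_distrib, hr]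
    simp
  refine ⟨⟨fun k o => ⟨hnn k o, ?_⟩, hrow, fun o => ?_⟩, fun c => ?_⟩
  · rw [← hrow k]
    exact Finset.single_le_sum (fun o _ => hnn k o) (Finset.mem_univ o)
  · have : ∑ k, trade x i j o1 o2 δ k o = ∑ k, x k o := by
      unfold trade
      rw [Finset.sum_add_distrib, ← Finset.sum_mul, ← Finset.mul_sum, Finset.sum_sub_distrib]
      simp
    rw [this]; exact hcol o
  · have : ∑ k, ∑ o, A c k o * trade x i j o1 o2 δ k o = ∑ k, ∑ o, A c k o * x k o := by
      have e : ∀ k, ∑ o, A c k o * trade x i j o1 o2 δ k o = ∑ o, A c k o * x k o +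
          ((if k = i then δ * (A c k o1 - A c k o2) else 0) -
            (if k = j then δ * (A c k o1 - A c k o2) else 0)) := by
        intro k
        have e2 : ∑ o, A c k o * ((if o = o1 then 1 else 0) - (if o = o2 then (1:ℝ) else 0))
            = A c k o1 - A c k o2 := by
          simp [mul_sub, Finset.sum_sub_distrib]
        have e3 : ∑ o, A c k o * trade x i j o1 o2 δ k o = ∑ o, A c k o * x k o +
            (δ * ((if k = i then 1 else 0) - (if k = j then 1 else 0))) *
            ∑ o, A c k o * ((if o = o1 then 1 else 0) - (if o = o2 then (1:ℝ) else 0)) := by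
          rw [Finset.mul_sum, ← Finset.sum_add_distrib]
          refine Finset.sum_congr rfl fun o _ => ?_
          unfold trade
          ring
        rw [e3, e2]
        split_ifs <;> ring
      simp only [e]
      rw [Finset.sum_add_distrib, Finset.sum_sub_distrib]
      simp [hty c o1, hty c o2]
    rw [this]; exact hA c

/-- For every preference profile and every nonempty linearly constrained feasible set,
there exists a feasible random assignment that is constrained ordinally efficient
and envy-free among agents of the same type. -/
theorem exists_constrained_ordinally_efficient_and_same_type_envy_free
    {N O : Type*} [Fintype N] [Fintype O]
    (q : O → ℕ) (hq : Fintype.card N ≤ ∑ o, q o)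
    (pref : N → O → O → Prop)
    (hcomplete : ∀ i a b, pref i a b ∨ pref i b a)
    (htrans : ∀ i a b c, pref i a b → pref i b c → pref i a c)
    {m : ℕ} (A : Fin m → N → O → ℝ) (b : Fin m → ℝ)
    (hne : ∃ x, Feasible q A b x) :
    ∃ x : N → O → ℝ, Feasible q A b x ∧
      (¬ ∃ x' : N → O → ℝ, Feasible q A b x' ∧
        (∀ i, SDom (pref i) (x' i) (x i)) ∧ (∃ j, StrictSDom (pref j) (x' j) (x j))) ∧
      (∀ i j, SameType A i j → SDom (pref i) (x i) (x j)) := by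
  set φ : (N → O → ℝ) → (N × O → ℝ) := fun x a => upperSum (pref a.1) (x a.1) a.2 with hφ
  have hφc : Continuous φ := by
    rw [hφ]; unfold upperSum; fun_prop
  obtain ⟨T, hTS, _, ⟨x, hxT⟩, hmaxT⟩ := lexmax_exists (fun k x => sumSmallest k (φ x))
    (fun k => (sumSmallest_continuous k).comp hφc) _ (feasible_compact q A b) hne
    (Fintype.card (N × O) + 1)
  have hx : Feasible q A b x := hTS hxT
  have hno : ∀ y, Feasible q A b y → ∀ t : ℝ, (∀ a, φ x a ≤ t → φ x a ≤ φ y a) →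
      (∀ a, t < φ x a → t < φ y a) → (∃ a, φ x a ≤ t ∧ φ x a < φ y a) → False :=
    fun y hy t => leximin_no_improve (φ x) (φ y) (hmaxT x hxT y hy) t
  refine ⟨x, hx, ?_, ?_⟩
  · rintro ⟨y, hy, hdom, j, _, o, ho⟩
    exact hno y hy (φ x (j, o)) (fun a _ => hdom a.1 a.2)
      (fun a ha => lt_of_lt_of_le ha (hdom a.1 a.2)) ⟨(j, o), le_refl _, ho⟩
  · intro i j hty o
    by_contra hlt
    push Not at hlt
    set t := upperSum (pref i) (x i) o with ht
    have hij : i ≠ j := by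
      rintro rfl
      exact lt_irrefl _ hlt
    have hxnn : ∀ k p, 0 ≤ x k p := fun k p => (hx.1.1 k p).1
    have ht0 : 0 ≤ t := Finset.sum_nonneg fun p _ => hxnn i p
    -- the objects in the upper set that `j` consumes
    set U := Finset.univ.filter (fun p => pref i p o) with hU
    set S := U.filter (fun p => 0 < x j p) with hS
    have hsumS : ∑ p ∈ S, x j p = upperSum (pref i) (x j) o := by
      unfold upperSum
      rw [hS, Finset.sum_filter]
      refine Finset.sum_congr rfl fun p _ => ?_
      split_ifs with h
      · rfl
      · exact le_antisymm (hxnn j p) (not_lt.mp h)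
    have hSne : S.Nonempty := by
      rw [Finset.nonempty_iff_ne_empty]
      intro h0
      rw [h0, Finset.sum_empty] at hsumS
      linarith
    obtain ⟨o1, ho1, hworst⟩ := exists_worst (pref j) (hcomplete j) (htrans j) S hSne
    have ho1U : pref i o1 o := by
      have := (Finset.mem_filter.mp ho1).1
      simpa [hU] using this
    have ho1pos : 0 < x j o1 := (Finset.mem_filter.mp ho1).2
    have hbig : ∀ p, pref j o1 p → t < upperSum (pref j) (x j) p := by
      intro p hp
      refine lt_of_lt_of_le hlt ?_
      rw [← hsumS]
      refine Finset.sum_le_sum_of_subset_of_nonneg ?_ fun p _ _ => hxnn j p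
      intro a ha
      simpa using htrans j a o1 p (hworst a ha) hp
    -- an object outside the upper set that `i` consumes
    have hlt1 : t < 1 := by
      refine lt_of_lt_of_le hlt ?_
      rw [← hx.1.2.1 j]
      exact Finset.sum_le_sum_of_subset_of_nonneg (Finset.filter_subset _ _)
        fun p _ _ => hxnn j p
    obtain ⟨o2, ho2U, ho2pos⟩ : ∃ o2, ¬ pref i o2 o ∧ 0 < x i o2 := by
      by_contra hcon
      push Not at hcon
      have : t = 1 := by
        rw [← hx.1.2.1 i, ht]
        refine Finset.sum_subset (Finset.filter_subset _ _) fun p _ hp => ?_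
        exact le_antisymm (hcon p (by simpa using hp)) (hxnn i p)
      linarith
    obtain ⟨δ, hδ0, hδ1, hδ2, hδ3⟩ : ∃ δ : ℝ, 0 < δ ∧ δ ≤ x j o1 ∧ δ ≤ x i o2 ∧
        ∀ p, pref j o1 p → t + δ < upperSum (pref j) (x j) p := by
      have ev : ∀ᶠ δ : ℝ in nhdsWithin 0 (Set.Ioi 0), 0 < δ ∧ δ ≤ x j o1 ∧ δ ≤ x i o2 ∧
          ∀ p, pref j o1 p → t + δ < upperSum (pref j) (x j) p := by
        refine Filter.Eventually.and self_mem_nhdsWithin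
          (Filter.Eventually.filter_mono nhdsWithin_le_nhds ?_)
        refine (eventually_le_nhds ho1pos).and ((eventually_le_nhds ho2pos).and ?_)
        rw [Filter.eventually_all]
        intro p
        by_cases hp : pref j o1 p
        · have := hbig p hp
          filter_upwards [eventually_lt_nhds (sub_pos.mpr this)] with δ hδ _
          linarith
        · exact Filter.Eventually.of_forall fun δ h => absurd h hp
      exact ev.exists
    have key : ∀ a : N × O, φ (trade x i j o1 o2 δ) a = φ x a +
        δ * ((if a.1 = i then 1 else 0) - (if a.1 = j then 1 else 0)) *
        ((if pref a.1 o1 a.2 then 1 else 0) - (if pref a.1 o2 a.2 then 1 else 0)) :=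
      fun a => trade_upperSum (pref a.1) x i j o1 o2 δ a.1 a.2
    have hmono : ∀ a : N × O, ¬ (a.1 = j ∧ pref j o1 a.2) →
        φ x a ≤ φ (trade x i j o1 o2 δ) a := by
      rintro ⟨k, p⟩ hnot
      rw [key]
      dsimp only at hnot ⊢
      by_cases hki : k = i
      · subst hki
        have himp : pref k o2 p → pref k o1 p := by
          intro h
          rcases hcomplete k o2 o with h' | h'
          · exact absurd h' ho2U
          · exact htrans k _ _ _ ho1U (htrans k _ _ _ h' h)
        rw [if_pos rfl, if_neg hij]
        split_ifs with g1 g2 g2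
        · linarith
        · linarith
        · exact absurd (himp g2) g1
        · linarith
      · by_cases hkj : k = j
        · subst hkj
          have g1 : ¬ pref k o1 p := fun h => hnot ⟨rfl, h⟩
          rw [if_neg hki, if_pos rfl, if_neg g1]
          split_ifs <;> linarith
        · rw [if_neg hki, if_neg hkj]
          linarith
    have hjlow : ∀ a : N × O, a.1 = j → pref j o1 a.2 →
        t < φ x a ∧ t < φ (trade x i j o1 o2 δ) a := by
      rintro ⟨k, p⟩ hk hp
      dsimp only at hk hp
      subst hk
      have h3 : t + δ < φ x (k, p) := hδ3 p hp
      refine ⟨by linarith, ?_⟩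
      rw [key]
      dsimp only
      rw [if_neg (Ne.symm hij), if_pos rfl, if_pos hp]
      split_ifs <;> linarith
    refine hno _ (trade_feasible q A b x hx i j hij hty o1 o2 δ hδ0.le hδ1 hδ2) t ?_ ?_ ?_
    · intro a ha
      refine hmono a fun h => ?_
      have := (hjlow a h.1 h.2).1
      linarith
    · intro a ha
      by_cases h : a.1 = j ∧ pref j o1 a.2
      · exact (hjlow a h.1 h.2).2
      · exact lt_of_lt_of_le ha (hmono a h)
    · refine ⟨(i, o), le_refl _, ?_⟩
      rw [key]
      dsimp only
      rw [if_pos rfl, if_neg hij, if_pos ho1U, if_neg ho2U]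
      linarith
end

section
/- For every preference profile and every nonempty linearly constrained feasible set ΔC, there exists a feasible random assignment x ∈ ΔC that is constrained ordinally efficient. -/
open Finset
open scoped Classical

/-- For every preference profile and every nonempty linearly constrained feasible set,
there exists a feasible random assignment that is constrained ordinally efficient. -/
theorem exists_constrained_ordinally_efficient
    {N O : Type*} [Fintype N] [Fintype O]
    (q : O → ℕ) (hq : Fintype.card N ≤ ∑ o, q o)
    (pref : N → O → O → Prop)
    (hcomplete : ∀ i a b, pref i a b ∨ pref i b a)
    (htrans : ∀ i a b c, pref i a b → pref i b c → pref i a c)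
    {m : ℕ} (A : Fin m → N → O → ℝ) (b : Fin m → ℝ)
    (hne : ∃ x, Feasible q A b x) :
    ∃ x : N → O → ℝ, Feasible q A b x ∧
      ¬ ∃ x' : N → O → ℝ, Feasible q A b x' ∧
        (∀ i, SDom (pref i) (x' i) (x i)) ∧ (∃ j, StrictSDom (pref j) (x' j) (x j)) := by
  have hcompact : IsCompact {x : N → O → ℝ | Feasible q A b x} := by
    refine IsCompact.of_isClosed_subset
      (isCompact_Icc (a := (0 : N → O → ℝ)) (b := (1 : N → O → ℝ))) ?_ ?_
    · have hset : {x : N → O → ℝ | Feasible q A b x} =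
          (((⋂ i, ⋂ o, ({x : N → O → ℝ | 0 ≤ x i o} ∩ {x | x i o ≤ 1})) ∩
          ((⋂ i, {x : N → O → ℝ | ∑ o, x i o = 1}) ∩
          (⋂ o, {x : N → O → ℝ | ∑ i, x i o ≤ (q o : ℝ)}))) ∩
          (⋂ c, {x : N → O → ℝ | ∑ i, ∑ o, A c i o * x i o ≤ b c})) := by
        ext x
        simp only [Feasible, IsRandomAssignment, Set.mem_setOf_eq, Set.mem_inter_iff,
          Set.mem_iInter]
      rw [hset]
      refine IsClosed.inter (IsClosed.inter ?_ (IsClosed.inter ?_ ?_)) ?_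
      · exact isClosed_iInter fun i => isClosed_iInter fun o =>
          (isClosed_le (by fun_prop) (by fun_prop)).inter
            (isClosed_le (by fun_prop) (by fun_prop))
      · exact isClosed_iInter fun i => isClosed_eq (by fun_prop) (by fun_prop)
      · exact isClosed_iInter fun o => isClosed_le (by fun_prop) (by fun_prop)
      · exact isClosed_iInter fun c => isClosed_le (by fun_prop) (by fun_prop)
    · intro x hx
      exact ⟨fun i o => (hx.1.1 i o).1, fun i o => (hx.1.1 i o).2⟩
  have hcont : Continuous (fun x : N → O → ℝ => ∑ i, ∑ o, upperSum (pref i) (x i) o) := by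
    unfold upperSum
    fun_prop
  obtain ⟨x, hx, hmax⟩ := hcompact.exists_isMaxOn hne hcont.continuousOn
  refine ⟨x, hx, ?_⟩
  rintro ⟨y, hy, hdom, j, -, o, hlt⟩
  have hle : ∑ i, ∑ o, upperSum (pref i) (y i) o ≤ ∑ i, ∑ o, upperSum (pref i) (x i) o :=
    hmax hy
  refine absurd hle (not_le.mpr ?_)
  refine Finset.sum_lt_sum (fun i _ => Finset.sum_le_sum fun o _ => hdom i o)
    ⟨j, Finset.mem_univ j, ?_⟩
  exact Finset.sum_lt_sum (fun o _ => hdom j o) ⟨o, Finset.mem_univ o, hlt⟩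
end

section
/- For every preference profile and every nonempty linearly constrained feasible set ΔC, there exists a feasible random assignment x ∈ ΔC that is envy-free among agents of the same type, i.e., x_i sd(≽_i) x_j for every pair of agents i, j of the same type. -/
open Finset
open scoped Classical

theorem avg_sum_aux {N : Type*} [Fintype N] (r : N → N → Prop)
    (hr : ∀ i, r i i) (hs : ∀ i j, r i j → r j i) (ht : ∀ i j k, r i j → r j k → r i k)
    (w f : N → ℝ) (hw : ∀ i j, r i j → w i = w j) :
    ∑ i, w i * ((∑ j ∈ Finset.univ.filter (fun j => r i j), f j) /
      ((Finset.univ.filter (fun j => r i j)).card : ℝ)) = ∑ i, w i * f i := by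
  have hT : ∀ i j, r i j → Finset.univ.filter (fun k => r i k)
      = Finset.univ.filter (fun k => r j k) := by
    intro i j h
    ext k
    simp only [Finset.mem_filter, Finset.mem_univ, true_and]
    exact ⟨fun h' => ht _ _ _ (hs _ _ h) h', fun h' => ht _ _ _ h h'⟩
  have h1 : ∀ i, w i * ((∑ j ∈ Finset.univ.filter (fun j => r i j), f j) /
      ((Finset.univ.filter (fun j => r i j)).card : ℝ))
      = ∑ j, if r j i then w j * f j / ((Finset.univ.filter (fun k => r j k)).card : ℝ)
          else 0 := by
    intro i
    rw [← Finset.sum_filter, Finset.sum_div, Finset.mul_sum]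
    have e : Finset.univ.filter (fun j => r j i) = Finset.univ.filter (fun j => r i j) := by
      ext k
      simp only [Finset.mem_filter, Finset.mem_univ, true_and]
      exact ⟨hs _ _, hs _ _⟩
    rw [e]
    refine Finset.sum_congr rfl fun j hj => ?_
    have hj' : r i j := (Finset.mem_filter.mp hj).2
    rw [hT i j hj', hw i j hj', mul_div_assoc]
  rw [Finset.sum_congr rfl fun i _ => h1 i, Finset.sum_comm]
  refine Finset.sum_congr rfl fun j _ => ?_
  rw [← Finset.sum_filter, Finset.sum_const, nsmul_eq_mul]
  have hc : ((Finset.univ.filter (fun k => r j k)).card : ℝ) ≠ 0 := by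
    have : 0 < (Finset.univ.filter (fun k => r j k)).card :=
      Finset.card_pos.mpr ⟨j, Finset.mem_filter.mpr ⟨Finset.mem_univ _, hr j⟩⟩
    exact_mod_cast this.ne'
  field_simp

/-- For every preference profile and every nonempty linearly constrained feasible set,
there exists a feasible random assignment that is envy-free among agents of the same type. -/
theorem exists_same_type_envy_free
    {N O : Type*} [Fintype N] [Fintype O]
    (q : O → ℕ) (hq : Fintype.card N ≤ ∑ o, q o)
    (pref : N → O → O → Prop)
    (hcomplete : ∀ i a b, pref i a b ∨ pref i b a)
    (htrans : ∀ i a b c, pref i a b → pref i b c → pref i a c)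
    {m : ℕ} (A : Fin m → N → O → ℝ) (b : Fin m → ℝ)
    (hne : ∃ x, Feasible q A b x) :
    ∃ x : N → O → ℝ, Feasible q A b x ∧
      ∀ i j, SameType A i j → SDom (pref i) (x i) (x j) := by
  obtain ⟨x, ⟨hx01, hx1, hxq⟩, hA⟩ := hne
  have hr : ∀ i, SameType A i i := fun i c o => rfl
  have hs : ∀ i j, SameType A i j → SameType A j i := fun i j h c o => (h c o).symm
  have ht : ∀ i j k, SameType A i j → SameType A j k → SameType A i k :=
    fun i j k h h' c o => (h c o).trans (h' c o)
  have key := fun (w f : N → ℝ) (hw : ∀ i j, SameType A i j → w i = w j) =>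
    avg_sum_aux (SameType A) hr hs ht w f hw
  have hc : ∀ i, (0 : ℝ) < ((Finset.univ.filter (fun k => SameType A i k)).card : ℝ) := by
    intro i
    have : 0 < (Finset.univ.filter (fun k => SameType A i k)).card :=
      Finset.card_pos.mpr ⟨i, Finset.mem_filter.mpr ⟨Finset.mem_univ _, hr i⟩⟩
    exact_mod_cast this
  refine ⟨fun i o => (∑ j ∈ Finset.univ.filter (fun j => SameType A i j), x j o) /
      ((Finset.univ.filter (fun j => SameType A i j)).card : ℝ), ⟨⟨?_, ?_, ?_⟩, ?_⟩, ?_⟩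
  · intro i o
    refine ⟨div_nonneg (Finset.sum_nonneg fun j _ => (hx01 j o).1) (hc i).le, ?_⟩
    rw [div_le_one (hc i)]
    refine (Finset.sum_le_sum fun j _ => (hx01 j o).2).trans ?_
    simp
  · intro i
    rw [← Finset.sum_div, Finset.sum_comm, Finset.sum_congr rfl fun j _ => hx1 j]
    simpa using div_self (hc i).ne'
  · intro o
    have h := key (fun _ => 1) (fun j => x j o) (fun _ _ _ => rfl)
    simp only [one_mul] at h
    rw [h]
    exact hxq o
  · intro c
    refine le_trans (le_of_eq ?_) (hA c)
    rw [Finset.sum_comm, Finset.sum_comm (f := fun i o => A c i o * x i o)]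
    exact Finset.sum_congr rfl fun o _ =>
      key (fun i => A c i o) (fun j => x j o) (fun i j h => h c o)
  · intro i j h o
    have e : Finset.univ.filter (fun k => SameType A i k)
        = Finset.univ.filter (fun k => SameType A j k) := by
      ext k
      simp only [Finset.mem_filter, Finset.mem_univ, true_and]
      exact ⟨fun h' => ht _ _ _ (hs _ _ h) h', fun h' => ht _ _ _ h h'⟩
    simp only [e]
    exact le_rfl
end

section
/- In the unconstrained object allocation problem on the full preference domain (agents may be indifferent between objects), there always exists a random assignment that is ordinally efficient and envy-free: no other random assignment weakly stochastically dominates it for all agents with strict dominance for some agent, and x_i sd(≽_i) x_j holds for every pair of agents i, j. -/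
open Finset
open scoped Classical

/-- Existence of max-min fair points on compact convex sets (water filling). -/
lemma exists_maxmin_fair {ι : Type*} [Fintype ι] (n : ℕ) :
    ∀ (S : Finset ι), S.card = n → ∀ (K : Set (ι → ℝ)), IsCompact K → Convex ℝ K → K.Nonempty →
    ∃ x ∈ K, ∀ y ∈ K, ∀ k ∈ S, x k < y k → ∃ l ∈ S, y l < x l ∧ x l ≤ x k := by
  induction n with
  | zero =>
    intro S hS K _ _ hne
    obtain ⟨x, hx⟩ := hne
    rw [Finset.card_eq_zero] at hS
    subst hS
    exact ⟨x, hx, by simp⟩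
  | succ n ih =>
    intro S hS K hK hconv hne
    have hSne : S.Nonempty := by
      rw [← Finset.card_pos]; omega
    have hcont : Continuous (fun x : ι → ℝ => S.inf' hSne (fun k => x k)) :=
      Continuous.finset_inf'_apply hSne (fun k _ => continuous_apply k)
    obtain ⟨w, hwK, hw⟩ := hK.exists_isMaxOn hne hcont.continuousOn
    set m := S.inf' hSne (fun k => w k) with hm
    have hmax : ∀ y ∈ K, ∃ k ∈ S, y k ≤ m := by
      intro y hy
      have h1 : S.inf' hSne (fun k => y k) ≤ m := hw hy
      obtain ⟨k, hk, hk'⟩ := Finset.exists_mem_eq_inf' hSne (fun k => y k)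
      exact ⟨k, hk, by rw [← hk']; exact h1⟩
    let K' : Set (ι → ℝ) := K ∩ {x | ∀ k ∈ S, m ≤ x k}
    have hclosed : IsClosed {x : ι → ℝ | ∀ k ∈ S, m ≤ x k} := by
      simp only [Set.ofPred_forall]
      exact isClosed_iInter fun k => isClosed_iInter fun _ =>
        isClosed_le continuous_const (continuous_apply k)
    have hconv2 : Convex ℝ {x : ι → ℝ | ∀ k ∈ S, m ≤ x k} := by
      intro x hx y hy a b ha hb hab k hk
      have h1 := hx k hk
      have h2 := hy k hk
      simp only [Pi.add_apply, Pi.smul_apply, smul_eq_mul]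
      have h3 : a * m + b * m = m := by rw [← add_mul, hab, one_mul]
      have h4 := mul_le_mul_of_nonneg_left h1 ha
      have h5 := mul_le_mul_of_nonneg_left h2 hb
      linarith
    have hK' : IsCompact K' := hK.inter_right hclosed
    have hconv' : Convex ℝ K' := hconv.inter hconv2
    have hwK' : w ∈ K' := ⟨hwK, fun k hk => Finset.inf'_le (fun k => w k) hk⟩
    have hk0 : ∃ k0 ∈ S, ∀ x ∈ K', x k0 ≤ m := by
      by_contra hcon
      push Not at hcon
      choose! p hp hp' using hcon
      have hc : (0 : ℝ) < S.card := by
        exact_mod_cast Finset.card_pos.mpr hSne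
      have hz : ∑ k ∈ S, (1 / (S.card : ℝ)) • p k ∈ K := by
        apply hconv.sum_mem
        · intro k _; positivity
        · rw [Finset.sum_const, nsmul_eq_mul]; field_simp
        · intro k hk; exact (hp k hk).1
      obtain ⟨k, hk, hle⟩ := hmax _ hz
      have hlt : ∑ l ∈ S, (1 / (S.card : ℝ)) * m < ∑ l ∈ S, (1 / (S.card : ℝ)) * p l k := by
        apply Finset.sum_lt_sum
        · intro l hl
          have := (hp l hl).2 k hk
          gcongr
        · refine ⟨k, hk, ?_⟩
          have := hp' k hk
          gcongr
      have he : ∑ l ∈ S, (1 / (S.card : ℝ)) * m = m := by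
        rw [Finset.sum_const, nsmul_eq_mul]; field_simp
      simp only [Finset.sum_apply, Pi.smul_apply, smul_eq_mul] at hle
      linarith
    obtain ⟨k0, hk0S, hk0⟩ := hk0
    obtain ⟨x, hxK', hx⟩ := ih (S.erase k0) (by rw [Finset.card_erase_of_mem hk0S]; omega) K' hK'
      hconv' ⟨w, hwK'⟩
    refine ⟨x, hxK'.1, ?_⟩
    intro y hy k hk hlt
    by_cases hex : ∃ l ∈ S, y l < m ∧ x l = m
    · obtain ⟨l, hl, h1, h2⟩ := hex
      exact ⟨l, hl, by linarith, by rw [h2]; exact hxK'.2 k hk⟩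
    · push Not at hex
      -- a small step towards y stays in the restricted set
      have hstep : ∃ t : ℝ, 0 < t ∧ t ≤ 1 ∧ ∀ l ∈ S, m ≤ (1 - t) * x l + t * y l := by
        have hev : ∀ᶠ t : ℝ in nhdsWithin 0 (Set.Ioi 0),
            ∀ l ∈ S, m ≤ (1 - t) * x l + t * y l := by
          rw [Filter.eventually_all_finset]
          intro l hl
          by_cases hyl : y l < m
          · have hxl : m < x l := lt_of_le_of_ne (hxK'.2 l hl) (Ne.symm (hex l hl hyl))
            have hc : ContinuousAt (fun t : ℝ => (1 - t) * x l + t * y l) 0 := by fun_prop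
            have h3 := hc.eventually (lt_mem_nhds (a := m) (by simpa using hxl))
            exact (h3.filter_mono nhdsWithin_le_nhds).mono fun t ht => le_of_lt ht
          · have h01 : ∀ᶠ t : ℝ in nhdsWithin 0 (Set.Ioi 0), t ∈ Set.Ioo (0 : ℝ) 1 :=
              Ioo_mem_nhdsGT one_pos
            filter_upwards [h01] with t ht
            have h1 := hxK'.2 l hl
            have h2 := ht.1
            have h3 := ht.2
            push Not at hyl
            nlinarith
        have h01 : ∀ᶠ t : ℝ in nhdsWithin 0 (Set.Ioi 0), t ∈ Set.Ioo (0 : ℝ) 1 :=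
          Ioo_mem_nhdsGT one_pos
        obtain ⟨t, ht1, ht2⟩ := (hev.and h01).exists
        exact ⟨t, ht2.1, ht2.2.le, ht1⟩
      obtain ⟨t, ht0, ht1, ht⟩ := hstep
      have hzK : (1 - t) • x + t • y ∈ K' := by
        refine ⟨hconv hxK'.1 hy (by linarith) ht0.le (by ring), ?_⟩
        intro l hl
        simpa using ht l hl
      have hzk : x k < ((1 - t) • x + t • y) k := by
        simp only [Pi.add_apply, Pi.smul_apply, smul_eq_mul]
        nlinarith
      have hkne : k ≠ k0 := by
        rintro rfl
        have := hk0 _ hzK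
        have := hxK'.2 k hk
        linarith
      obtain ⟨l, hl, h1, h2⟩ := hx _ hzK k (Finset.mem_erase.mpr ⟨hkne, hk⟩) hzk
      refine ⟨l, (Finset.mem_erase.mp hl).2, ?_, h2⟩
      simp only [Pi.add_apply, Pi.smul_apply, smul_eq_mul] at h1
      by_contra hcon
      push Not at hcon
      nlinarith

/-- Random assignments exist. -/
lemma exists_randomAssignment {N O : Type*} [Fintype N] [Fintype O]
    (q : O → ℕ) (hq : Fintype.card N ≤ ∑ o, q o) :
    ∃ x : N → O → ℝ, IsRandomAssignment q x := by
  rcases isEmpty_or_nonempty N with hN | hN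
  · exact ⟨fun i => isEmptyElim i, fun i => isEmptyElim i, fun i => isEmptyElim i, by simp⟩
  have hpos : 0 < Fintype.card N := Fintype.card_pos
  have hQ : (0 : ℝ) < ∑ o, (q o : ℝ) := by
    have : 0 < ∑ o, q o := by omega
    exact_mod_cast this
  have hq' : (Fintype.card N : ℝ) ≤ ∑ o, (q o : ℝ) := by exact_mod_cast hq
  refine ⟨fun _ o => (q o : ℝ) / ∑ o, (q o : ℝ), ?_, ?_, ?_⟩
  · intro i o
    refine ⟨by positivity, ?_⟩
    rw [div_le_one hQ]
    exact Finset.single_le_sum (f := fun o => (q o : ℝ)) (fun _ _ => by positivity)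
      (Finset.mem_univ o)
  · intro i
    rw [← Finset.sum_div]
    exact div_self hQ.ne'
  · intro o
    rw [Finset.sum_const, nsmul_eq_mul, Finset.card_univ, mul_div_assoc', div_le_iff₀ hQ, mul_comm]
    gcongr

lemma upperSum_add_smul {O : Type*} [Fintype O] (pref : O → O → Prop) (a b : ℝ) (x y : O → ℝ)
    (o : O) : upperSum pref (fun c => a * x c + b * y c) o
      = a * upperSum pref x o + b * upperSum pref y o := by
  simp only [upperSum, Finset.sum_add_distrib, Finset.mul_sum]

lemma upperSum_single {O : Type*} [Fintype O] (pref : O → O → Prop) (a o : O) :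
    upperSum pref (fun c => if c = a then (1 : ℝ) else 0) o = if pref a o then 1 else 0 := by
  simp [upperSum, Finset.sum_ite_eq']

lemma upperSum_transfer {O : Type*} [Fintype O] (pref : O → O → Prop) (x : O → ℝ) (e : ℝ)
    (a b o : O) :
    upperSum pref (fun c => x c + e * ((if c = a then (1 : ℝ) else 0) - if c = b then 1 else 0)) o
      = upperSum pref x o + e * ((if pref a o then 1 else 0) - if pref b o then 1 else 0) := by
  rw [← upperSum_single pref a o, ← upperSum_single pref b o]
  simp only [upperSum, Finset.sum_add_distrib, Finset.mul_sum, mul_sub, Finset.sum_sub_distrib]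

lemma isCompact_randomAssignment {N O : Type*} [Fintype N] [Fintype O] (q : O → ℕ) :
    IsCompact {x : N → O → ℝ | IsRandomAssignment q x} := by
  have hbox : IsCompact (Set.Icc (0 : N → O → ℝ) 1) := by
    have : IsCompact (Set.pi Set.univ fun _ : N => Set.pi Set.univ fun _ : O => Set.Icc (0 : ℝ) 1) :=
      isCompact_univ_pi fun _ => isCompact_univ_pi fun _ => isCompact_Icc
    convert this using 1
    ext x
    simp only [Set.mem_Icc, Set.mem_pi, Set.mem_univ, forall_true_left, Pi.le_def, Pi.zero_apply,
      Pi.one_apply, ← forall_and]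
  apply hbox.of_isClosed_subset
  · simp only [IsRandomAssignment, Set.ofPred_and, Set.ofPred_forall]
    refine IsClosed.inter ?_ (IsClosed.inter ?_ ?_)
    · refine isClosed_iInter fun i => isClosed_iInter fun o => IsClosed.inter ?_ ?_
      · exact isClosed_le (by fun_prop) (by fun_prop)
      · exact isClosed_le (by fun_prop) (by fun_prop)
    · exact isClosed_iInter fun i => isClosed_eq (by fun_prop) (by fun_prop)
    · exact isClosed_iInter fun o => isClosed_le (by fun_prop) (by fun_prop)
  · intro x hx
    exact ⟨fun i o => (hx.1 i o).1, fun i o => (hx.1 i o).2⟩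

lemma convex_randomAssignment {N O : Type*} [Fintype N] [Fintype O] (q : O → ℕ) :
    Convex ℝ {x : N → O → ℝ | IsRandomAssignment q x} := by
  intro x hx y hy a b ha hb hab
  refine ⟨fun i o => ?_, fun i => ?_, fun o => ?_⟩
  · have h1 := hx.1 i o
    have h2 := hy.1 i o
    simp only [Pi.add_apply, Pi.smul_apply, smul_eq_mul]
    constructor <;> nlinarith [h1.1, h1.2, h2.1, h2.2]
  · simp only [Pi.add_apply, Pi.smul_apply, smul_eq_mul, Finset.sum_add_distrib, ← Finset.mul_sum]
    rw [hx.2.1 i, hy.2.1 i]; linarith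
  · have h1 := hx.2.2 o
    have h2 := hy.2.2 o
    simp only [Pi.add_apply, Pi.smul_apply, smul_eq_mul, Finset.sum_add_distrib, ← Finset.mul_sum]
    nlinarith

/-- A random assignment is max-min fair with respect to all cumulative shares. -/
lemma exists_fair_assignment {N O : Type*} [Fintype N] [Fintype O]
    (q : O → ℕ) (hq : Fintype.card N ≤ ∑ o, q o) (pref : N → O → O → Prop) :
    ∃ x : N → O → ℝ, IsRandomAssignment q x ∧ ∀ y, IsRandomAssignment q y → ∀ i o,
      upperSum (pref i) (x i) o < upperSum (pref i) (y i) o →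
      ∃ j o', upperSum (pref j) (y j) o' < upperSum (pref j) (x j) o' ∧
        upperSum (pref j) (x j) o' ≤ upperSum (pref i) (x i) o := by
  let F : (N → O → ℝ) → (N × O → ℝ) := fun x p => upperSum (pref p.1) (x p.1) p.2
  have hF : Continuous F := by
    simp only [F, upperSum]
    fun_prop
  have hlin : IsLinearMap ℝ F := by
    constructor
    · intro x y; ext p
      simp [F, upperSum, Finset.sum_add_distrib]
    · intro c x; ext p
      simp [F, upperSum, Finset.mul_sum]
  obtain ⟨x0, hx0⟩ := exists_randomAssignment q hq
  obtain ⟨_, ⟨x, hx, rfl⟩, hfair⟩ := exists_maxmin_fair _ (Finset.univ : Finset (N × O)) rfl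
    (F '' {x | IsRandomAssignment q x}) ((isCompact_randomAssignment q).image hF)
    ((convex_randomAssignment q).is_linear_image hlin) ⟨_, x0, hx0, rfl⟩
  refine ⟨x, hx, ?_⟩
  intro y hy i o hlt
  obtain ⟨⟨j, o'⟩, _, h1, h2⟩ := hfair (F y) ⟨y, hy, rfl⟩ (i, o) (Finset.mem_univ _) hlt
  exact ⟨j, o', h1, h2⟩

/-- In the unconstrained object allocation problem on the full preference domain,
there exists a random assignment that is ordinally efficient and envy-free. -/
theorem exists_ordinally_efficient_and_envy_free
    {N O : Type*} [Fintype N] [Fintype O]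
    (q : O → ℕ) (hq : Fintype.card N ≤ ∑ o, q o)
    (pref : N → O → O → Prop)
    (hcomplete : ∀ i a b, pref i a b ∨ pref i b a)
    (htrans : ∀ i a b c, pref i a b → pref i b c → pref i a c) :
    ∃ x : N → O → ℝ, IsRandomAssignment q x ∧
      (¬ ∃ x' : N → O → ℝ, IsRandomAssignment q x' ∧
        (∀ i, SDom (pref i) (x' i) (x i)) ∧ (∃ j, StrictSDom (pref j) (x' j) (x j))) ∧
      (∀ i j, SDom (pref i) (x i) (x j)) := by
  obtain ⟨x, hx, hfair⟩ := exists_fair_assignment q hq pref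
  refine ⟨x, hx, ?_, ?_⟩
  · rintro ⟨x', hx', hdom, j, -, o, hlt⟩
    obtain ⟨l, o', h1, -⟩ := hfair x' hx' j o hlt
    exact absurd (hdom l o') (not_le.mpr h1)
  · intro i j o
    by_contra hcon
    push Not at hcon
    have hij : i ≠ j := by
      rintro rfl
      exact lt_irrefl _ hcon
    -- the object `b` outside the upper set that `i` consumes
    have hb : ∃ b, ¬ pref i b o ∧ 0 < x i b := by
      by_contra hno
      push Not at hno
      have h1 : upperSum (pref i) (x i) o = ∑ c, x i c := by
        unfold upperSum
        apply Finset.sum_subset (Finset.subset_univ _)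
        intro c _ hc
        have : ¬ pref i c o := by simpa using hc
        exact le_antisymm (hno c this) (hx.1 i c).1
      have h2 : upperSum (pref i) (x j) o ≤ ∑ c, x j c :=
        Finset.sum_le_sum_of_subset_of_nonneg (Finset.subset_univ _) fun c _ _ => (hx.1 j c).1
      rw [hx.2.1] at h1 h2
      linarith
    obtain ⟨b, hbo, hbpos⟩ := hb
    -- the `j`-worst object `a` in the upper set that `j` consumes
    have ha : ∃ a, pref i a o ∧ 0 < x j a ∧ ∀ c, pref i c o → 0 < x j c → pref j c a := by
      let T : Finset O := Finset.univ.filter fun c => pref i c o ∧ 0 < x j c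
      have hT : T.Nonempty := by
        by_contra hemp
        rw [Finset.not_nonempty_iff_eq_empty] at hemp
        have h1 : upperSum (pref i) (x j) o ≤ 0 := by
          apply Finset.sum_nonpos
          intro c hc
          by_contra hc'
          push Not at hc'
          have : c ∈ T := by
            simp only [T, Finset.mem_filter, Finset.mem_univ, true_and]
            exact ⟨by simpa using hc, hc'⟩
          rw [hemp] at this
          simp at this
        have h2 : 0 ≤ upperSum (pref i) (x i) o := Finset.sum_nonneg fun c _ => (hx.1 i c).1
        linarith
      obtain ⟨a, haT, hamin⟩ := Finset.exists_min_image T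
        (fun a => (Finset.univ.filter fun c => pref j a c).card) hT
      simp only [T, Finset.mem_filter, Finset.mem_univ, true_and] at haT hamin
      refine ⟨a, haT.1, haT.2, ?_⟩
      intro c hc hcpos
      by_contra hca
      have hac : pref j a c := (hcomplete j a c).resolve_right hca
      have hle := hamin c ⟨hc, hcpos⟩
      have hlt : (Finset.univ.filter fun d => pref j c d).card
          < (Finset.univ.filter fun d => pref j a d).card := by
        apply Finset.card_lt_card
        rw [Finset.ssubset_iff_of_subset]
        · refine ⟨a, ?_, ?_⟩
          · simpa using (hcomplete j a a).elim id id
          · simpa using hca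
        · intro d hd
          simp only [Finset.mem_filter, Finset.mem_univ, true_and] at hd ⊢
          exact htrans j _ _ _ hac hd
      omega
    obtain ⟨a, hao, hapos, haworst⟩ := ha
    have hab : a ≠ b := by
      rintro rfl
      exact hbo hao
    set e := min (x j a) (x i b) with he
    have hepos : 0 < e := lt_min hapos hbpos
    have he1 : e ≤ x j a := min_le_left _ _
    have he2 : e ≤ x i b := min_le_right _ _
    let d : N → ℝ := fun k => (if k = i then (1 : ℝ) else 0) - if k = j then 1 else 0
    let y : N → O → ℝ := fun k c =>
      x k c + (e * d k) * ((if c = a then (1 : ℝ) else 0) - if c = b then 1 else 0)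
    have hdi : d i = 1 := by simp [d, hij]
    have hdj : d j = -1 := by simp [d, hij.symm]
    have hdk : ∀ k, k ≠ i → k ≠ j → d k = 0 := by
      intro k h1 h2; simp [d, h1, h2]
    have hynn : ∀ k c, 0 ≤ y k c := by
      intro k c
      have h0 := (hx.1 k c).1
      simp only [y]
      by_cases hki : k = i
      · subst hki
        rw [hdi]
        by_cases hca : c = a
        · subst hca; simp [hab]; linarith
        · by_cases hcb : c = b
          · subst hcb; simp [hca]; linarith
          · simp [hca, hcb]; linarith
      · by_cases hkj : k = j
        · subst hkj
          rw [hdj]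
          by_cases hca : c = a
          · subst hca; simp [hab]; linarith
          · by_cases hcb : c = b
            · subst hcb; simp [hca]; linarith
            · simp [hca, hcb]; linarith
        · rw [hdk k hki hkj]; simpa using h0
    have hyrow : ∀ k, ∑ c, y k c = 1 := by
      intro k
      simp only [y, Finset.sum_add_distrib, ← Finset.mul_sum, Finset.sum_sub_distrib]
      simp [hx.2.1 k]
    have hy : IsRandomAssignment q y := by
      refine ⟨fun k c => ⟨hynn k c, ?_⟩, hyrow, ?_⟩
      · rw [← hyrow k]
        exact Finset.single_le_sum (fun c _ => hynn k c) (Finset.mem_univ c)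
      · intro c
        have hd0 : ∑ k, d k = 0 := by simp [d, Finset.sum_sub_distrib]
        simp only [y, Finset.sum_add_distrib, ← Finset.sum_mul, ← Finset.mul_sum, hd0]
        simpa using hx.2.2 c
    have hU : ∀ k c, upperSum (pref k) (y k) c = upperSum (pref k) (x k) c
        + (e * d k) * ((if pref k a c then 1 else 0) - if pref k b c then 1 else 0) :=
      fun k c => upperSum_transfer (pref k) (x k) (e * d k) a b c
    obtain ⟨l, o', h1, h2⟩ := hfair y hy i o (by
      rw [hU, hdi]; simp [hao, hbo, hepos])
    rw [hU] at h1
    by_cases hli : l = i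
    · subst hli
      rw [hdi] at h1
      have himp : pref l b o' → pref l a o' := fun hb' =>
        htrans l _ _ _ hao (htrans l _ _ _ ((hcomplete l o b).resolve_right hbo) hb')
      by_cases hb' : pref l b o'
      · simp [hb', himp hb'] at h1
      · by_cases ha' : pref l a o'
        · simp [hb', ha'] at h1; linarith
        · simp [hb', ha'] at h1
    · by_cases hlj : l = j
      · subst hlj
        rw [hdj] at h1
        have ha' : pref l a o' := by
          by_contra ha'
          by_cases hb' : pref l b o'
          · simp [hb', ha'] at h1; linarith
          · simp [hb', ha'] at h1
        have h3 : upperSum (pref i) (x l) o ≤ upperSum (pref l) (x l) o' := by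
          unfold upperSum
          rw [Finset.sum_filter, Finset.sum_filter]
          apply Finset.sum_le_sum
          intro c _
          have h0 := (hx.1 l c).1
          by_cases hc : pref i c o
          · rcases h0.eq_or_lt with h0 | h0
            · simp [← h0]
            · have : pref l c o' := htrans l _ _ _ (haworst c hc h0) ha'
              simp [hc, this]
          · simp only [hc, if_false]
            split_ifs <;> linarith
        linarith
      · rw [hdk l hli hlj] at h1
        simp at h1
end

section
/- Let Q = {h ∈ ℝ^n : h ≥ 0, A h ≤ b} be a nonempty polyhedron contained in the nonnegative orthant that is downward closed: whenever h ∈ Q and h' satisfies 0 ≤ h' ≤ h componentwise, then h' ∈ Q. Then there exist a matrix Ã with all entries nonnegative and a vector b̃ with all entries nonnegative such that Q = {h ∈ ℝ^n : h ≥ 0, Ã h ≤ b̃}. -/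
open Finset

/-- A nonempty, downward-closed polyhedron in the nonnegative orthant can be described
by a system of inequalities with nonnegative matrix and nonnegative right-hand side. -/
theorem downward_closed_polyhedron_nonneg_representation
    (n m : ℕ) (A : Fin m → Fin n → ℝ) (b : Fin m → ℝ)
    (Q : Set (Fin n → ℝ))
    (hQ : Q = {h | (∀ i, 0 ≤ h i) ∧ ∀ c, ∑ i, A c i * h i ≤ b c})
    (hne : Q.Nonempty)
    (hdown : ∀ h ∈ Q, ∀ h' : Fin n → ℝ, (∀ i, 0 ≤ h' i) → (∀ i, h' i ≤ h i) → h' ∈ Q) :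
    ∃ (m' : ℕ) (A' : Fin m' → Fin n → ℝ) (b' : Fin m' → ℝ),
      (∀ c i, 0 ≤ A' c i) ∧ (∀ c, 0 ≤ b' c) ∧
      Q = {h | (∀ i, 0 ≤ h i) ∧ ∀ c, ∑ i, A' c i * h i ≤ b' c} := by
  subst hQ
  obtain ⟨g, hg⟩ := hne
  have h0 := hdown g hg (fun _ => 0) (fun _ => le_refl _) hg.1
  refine ⟨m, fun c i => max (A c i) 0, b, fun c i => le_max_right _ _, fun c => ?_, ?_⟩
  · simpa using h0.2 c
  · ext h
    constructor
    · intro hh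
      refine ⟨hh.1, fun c => ?_⟩
      have h1 := hdown h hh (fun i => if 0 ≤ A c i then h i else 0)
        (fun i => by
          have := hh.1 i
          split_ifs <;> simp [this])
        (fun i => by
          have := hh.1 i
          split_ifs <;> simp [this])
      refine le_trans (le_of_eq ?_) (h1.2 c)
      refine Finset.sum_congr rfl fun i _ => ?_
      dsimp only
      split_ifs with hA
      · rw [max_eq_left hA]
      · rw [max_eq_right (not_le.mp hA).le]
        simp
    · intro hh
      refine ⟨hh.1, fun c => le_trans (Finset.sum_le_sum fun i _ => ?_) (hh.2 c)⟩
      exact mul_le_mul_of_nonneg_right (le_max_left _ _) (hh.1 i)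
end

section
/- Let Q = {h ∈ ℝ^n : h ≥ 0, Ã h ≤ b̃} with Ã ∈ ℝ^{m×n}, b̃ ∈ ℝ^m, and suppose Q is downward closed: h ∈ Q and 0 ≤ h' ≤ h componentwise imply h' ∈ Q. Fix a constraint row c, and suppose there exists a point h̃ ∈ Q with all coordinates strictly positive at which row c is binding (Σ_i ã^c_i h̃_i = b̃^c) while every other row c' ≠ c is slack (Σ_i ã^{c'}_i h̃_i < b̃^{c'}). Then every entry of row c of Ã is nonnegative: ã^c_j ≥ 0 for all j. -/
open Finset

/-- If a downward-closed polyhedron `{h ≥ 0 | Ã h ≤ b̃}` has a strictly positive point at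
which row `c` is the unique binding constraint, then all entries of row `c` are nonnegative. -/
theorem binding_row_of_downward_closed_is_nonneg
    (n m : ℕ) (A : Fin m → Fin n → ℝ) (b : Fin m → ℝ)
    (Q : Set (Fin n → ℝ))
    (hQ : Q = {h | (∀ i, 0 ≤ h i) ∧ ∀ c, ∑ i, A c i * h i ≤ b c})
    (hdown : ∀ h ∈ Q, ∀ h' : Fin n → ℝ, (∀ i, 0 ≤ h' i) → (∀ i, h' i ≤ h i) → h' ∈ Q)
    (c : Fin m) (ht : Fin n → ℝ)
    (htpos : ∀ i, 0 < ht i)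
    (htmem : ht ∈ Q)
    (hbind : ∑ i, A c i * ht i = b c)
    (hslack : ∀ c', c' ≠ c → ∑ i, A c' i * ht i < b c') :
    ∀ j, 0 ≤ A c j := by
  intro j
  have h1 := hdown ht htmem (fun i => if i = j then 0 else ht i)
    (fun i => by
      by_cases h : i = j
      · simp [h]
      · simpa [h] using (htpos i).le)
    (fun i => by
      by_cases h : i = j
      · simpa [h] using (htpos j).le
      · simp [h])
  rw [hQ] at h1
  have h2 := h1.2 c
  have h3 : ∑ i, A c i * ht i
      = ∑ i, A c i * (if i = j then 0 else ht i) + A c j * ht j := by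
    have h4 : A c j * ht j = ∑ i, if i = j then A c i * ht i else 0 := by simp
    rw [h4, ← Finset.sum_add_distrib]
    refine Finset.sum_congr rfl fun i _ => ?_
    by_cases h : i = j <;> simp [h]
  have h5 : 0 ≤ A c j * ht j := by
    have h2' : ∑ i, A c i * (if i = j then 0 else ht i) ≤ b c := h2
    linarith
  exact nonneg_of_mul_nonneg_left h5 (htpos j)
end

section
/- Let K ⊆ ℝ^d be a nonempty compact convex set and let g_1, …, g_n : ℝ^d → ℝ be linear maps. For each nonempty S ⊆ {1,…,n} define v(S) = max_{x ∈ K} min_{i ∈ S} g_i(x). Let B ⊆ {1,…,n} be nonempty with v(B) = λ, and suppose B is minimal in the sense that v(B') > λ for every nonempty proper subset B' ⊊ B. Then there is no y ∈ K such that g_i(y) ≥ λ for all i ∈ B with g_j(y) > λ for at least one j ∈ B. -/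
open Finset

/-- Abstract bottleneck lemma: if `B` is a minimal set with maximin value `λ` over the
compact convex set `K` (with linear objectives `g i`), then no point of `K` gives every
`i ∈ B` at least `λ` with at least one strict inequality. -/
theorem bottleneck_lemma_abstract
    (d n : ℕ) (K : Set (Fin d → ℝ))
    (hKne : K.Nonempty) (hKcomp : IsCompact K) (hKconv : Convex ℝ K)
    (g : Fin n → (Fin d → ℝ) →ₗ[ℝ] ℝ)
    (v : Finset (Fin n) → ℝ)
    (hv : ∀ S : Finset (Fin n), S.Nonempty →
      IsGreatest {r | ∃ x ∈ K, r = sInf ((fun i => g i x) '' (S : Set (Fin n)))} (v S))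
    (B : Finset (Fin n)) (hB : B.Nonempty) (lam : ℝ) (hvB : v B = lam)
    (hmin : ∀ B' : Finset (Fin n), B'.Nonempty → B' ⊂ B → lam < v B') :
    ¬ ∃ y ∈ K, (∀ i ∈ B, lam ≤ g i y) ∧ ∃ j ∈ B, lam < g j y := by
  rintro ⟨y, hyK, hy, j, hj, hjy⟩
  have key : ∀ z ∈ K, ¬ ∀ i ∈ B, lam < g i z := by
    intro z hz h
    have hle : sInf ((fun i => g i z) '' (B : Set (Fin n))) ≤ v B := (hv B hB).2 ⟨z, hz, rfl⟩
    have hne : ((fun i => g i z) '' (B : Set (Fin n))).Nonempty := (Finset.coe_nonempty.2 hB).image _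
    obtain ⟨i, hi, hi2⟩ := hne.csInf_mem (B.finite_toSet.image _)
    have := h i (by simpa using hi)
    simp only at hi2
    linarith
  by_cases hne : (B.erase j).Nonempty
  · have hlt := hmin _ hne (Finset.erase_ssubset hj)
    obtain ⟨x, hxK, hx⟩ := (hv _ hne).1
    have hxi : ∀ i ∈ B.erase j, lam < g i x := by
      intro i hi
      have : sInf ((fun i => g i x) '' ((B.erase j : Finset (Fin n)) : Set (Fin n))) ≤ g i x :=
        csInf_le ((B.erase j).finite_toSet.image _).bddBelow ⟨i, by exact_mod_cast hi, rfl⟩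
      linarith
    set e := g j x - lam with he
    set c := g j y - lam with hc
    have hc0 : 0 < c := by linarith
    have hD : 0 < (|e| + 1) + c := by positivity
    have ha : 0 < (|e| + 1) / ((|e| + 1) + c) := by positivity
    have hb : 0 < c / ((|e| + 1) + c) := by positivity
    have hab : (|e| + 1) / ((|e| + 1) + c) + c / ((|e| + 1) + c) = 1 := by field_simp
    have hpos : 0 < (|e| + 1) / ((|e| + 1) + c) * c + c / ((|e| + 1) + c) * e := by
      have h1 : (|e| + 1) / ((|e| + 1) + c) * c + c / ((|e| + 1) + c) * e
          = c * (|e| + 1 + e) / ((|e| + 1) + c) := by ring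
      rw [h1]
      have : 0 < |e| + 1 + e := by linarith [neg_abs_le e]
      positivity
    generalize (|e| + 1) / ((|e| + 1) + c) = a at *
    generalize c / ((|e| + 1) + c) = b at *
    refine key (a • y + b • x) (hKconv hyK hxK ha.le hb.le hab) ?_
    intro i hi
    simp only [map_add, map_smul, smul_eq_mul]
    have hb' : b = 1 - a := by linarith
    by_cases hij : i = j
    · subst hij
      rw [he, hc] at hpos
      subst hb'
      linarith
    · have h1 := mul_le_mul_of_nonneg_left (hy i hi) ha.le
      have h2 := mul_lt_mul_of_pos_left (hxi i (Finset.mem_erase.2 ⟨hij, hi⟩)) hb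
      subst hb'
      linarith
  · refine key y hyK ?_
    intro i hi
    by_cases hij : i = j
    · exact hij ▸ hjy
    · exact absurd ⟨i, Finset.mem_erase.2 ⟨hij, hi⟩⟩ hne
end

section
/- Fix finite agent and object sets N, O, quotas q_o ∈ ℕ with Σ_o q_o ≥ |N|, a constraint matrix A ∈ ℝ^{m×(N×O)} and vector b ∈ ℝ^m, a finite set F of triples (i, T, γ) with i ∈ N, T ⊆ O, γ ∈ ℝ, and for each agent i a subset T_i ⊆ O. Let K = {x ∈ ΔD : Ax ≤ b and Σ_{o∈T} x_{i,o} ≥ γ for all (i,T,γ) ∈ F}, assume K is nonempty, and for nonempty S ⊆ N set v(S) = max_{x∈K} min_{i∈S} Σ_{o∈T_i} x_{i,o}. Let B ⊆ N be nonempty with v(B) = λ and v(B') > λ for every nonempty proper subset B' ⊊ B. Then there exists no y ∈ K such that Σ_{o∈T_i} y_{i,o} ≥ λ for all i ∈ B with strict inequality for at least one i ∈ B. -/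
open Finset
open scoped Classical

/-- Bottleneck lemma for the constrained serial rule: if `B` is a minimal set of agents
with maximin value `λ` for the LP feasible region `K`, then no feasible `y` gives every
agent of `B` at least `λ` from her top indifference classes with one strict inequality. -/
theorem bottleneck_lemma
    {N O : Type*} [Fintype N] [Fintype O]
    (q : O → ℕ) (hq : Fintype.card N ≤ ∑ o, q o)
    {m : ℕ} (A : Fin m → N → O → ℝ) (b : Fin m → ℝ)
    (F : Finset (N × Finset O × ℝ))
    (T : N → Finset O)
    (K : Set (N → O → ℝ))
    (hK : K = {x | IsRandomAssignment q x ∧ (∀ c, ∑ i, ∑ o, A c i o * x i o ≤ b c) ∧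
      ∀ t ∈ F, t.2.2 ≤ ∑ o ∈ t.2.1, x t.1 o})
    (hKne : K.Nonempty)
    (v : Finset N → ℝ)
    (hv : ∀ S : Finset N, S.Nonempty →
      IsGreatest {r | ∃ x ∈ K, r = sInf ((fun i => ∑ o ∈ T i, x i o) '' (S : Set N))} (v S))
    (B : Finset N) (hB : B.Nonempty) (lam : ℝ) (hvB : v B = lam)
    (hmin : ∀ B' : Finset N, B'.Nonempty → B' ⊂ B → lam < v B') :
    ¬ ∃ y ∈ K, (∀ i ∈ B, lam ≤ ∑ o ∈ T i, y i o) ∧ ∃ j ∈ B, lam < ∑ o ∈ T j, y j o := by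
  rintro ⟨y, hy, hyB, j, hj, hjy⟩
  -- no feasible point is strictly above `lam` on all of `B`
  have key : ∀ z ∈ K, (∀ i ∈ B, lam < ∑ o ∈ T i, z i o) → False := by
    intro z hz hzB
    have hle := (hv B hB).2 ⟨z, hz, rfl⟩
    have hfin : ((fun i => ∑ o ∈ T i, z i o) '' (B : Set N)).Finite :=
      (B.finite_toSet).image _
    have hne : ((fun i => ∑ o ∈ T i, z i o) '' (B : Set N)).Nonempty :=
      Set.Nonempty.image _ (by simpa using hB)
    obtain ⟨i, hi, hi'⟩ := hne.csInf_mem hfin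
    have h1 := hzB i (by simpa using hi)
    simp only at hi'
    rw [← hi', hvB] at hle
    linarith
  -- `K` is convex
  have hconv : ∀ x ∈ K, ∀ e : ℝ, 0 ≤ e → e ≤ 1 →
      (fun i o => e * x i o + (1 - e) * y i o) ∈ K := by
    intro x hx e he0 he1
    rw [hK] at hx hy ⊢
    obtain ⟨⟨hx1, hx2, hx3⟩, hx4, hx5⟩ := hx
    obtain ⟨⟨hy1, hy2, hy3⟩, hy4, hy5⟩ := hy
    have he1' : 0 ≤ 1 - e := by linarith
    refine ⟨⟨?_, ?_, ?_⟩, ?_, ?_⟩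
    · intro i o
      obtain ⟨a1, a2⟩ := hx1 i o
      obtain ⟨b1, b2⟩ := hy1 i o
      constructor
      · positivity
      · nlinarith [mul_le_mul_of_nonneg_left a2 he0, mul_le_mul_of_nonneg_left b2 he1']
    · intro i
      simp only [sum_add_distrib, ← mul_sum, hx2, hy2]
      ring
    · intro o
      simp only [sum_add_distrib, ← mul_sum]
      nlinarith [mul_le_mul_of_nonneg_left (hx3 o) he0,
        mul_le_mul_of_nonneg_left (hy3 o) he1']
    · intro c
      have : ∑ i, ∑ o, A c i o * (e * x i o + (1 - e) * y i o)
          = e * (∑ i, ∑ o, A c i o * x i o) + (1 - e) * ∑ i, ∑ o, A c i o * y i o := by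
        simp only [mul_sum, ← sum_add_distrib]
        refine sum_congr rfl fun i _ => sum_congr rfl fun o _ => ?_
        ring
      simp only [this]
      nlinarith [mul_le_mul_of_nonneg_left (hx4 c) he0,
        mul_le_mul_of_nonneg_left (hy4 c) he1']
    · intro t ht
      simp only [sum_add_distrib, ← mul_sum]
      nlinarith [mul_le_mul_of_nonneg_left (hx5 t ht) he0,
        mul_le_mul_of_nonneg_left (hy5 t ht) he1']
  by_cases hE : (B.erase j).Nonempty
  · have hlt := hmin _ hE (erase_ssubset hj)
    obtain ⟨x, hx, hxv⟩ := (hv _ hE).1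
    have hxB : ∀ i ∈ B.erase j, lam < ∑ o ∈ T i, x i o := by
      intro i hi
      refine lt_of_lt_of_le hlt ?_
      rw [hxv]
      exact csInf_le ((finite_toSet _).image _).bddBelow ⟨i, by exact_mod_cast hi, rfl⟩
    obtain ⟨e, he0, he1, hej⟩ : ∃ e : ℝ, 0 < e ∧ e ≤ 1 ∧
        lam < e * (∑ o ∈ T j, x j o) + (1 - e) * ∑ o ∈ T j, y j o := by
      generalize (∑ o ∈ T j, x j o) = s
      generalize (∑ o ∈ T j, y j o) = t at hjy
      have hd : 0 < t - lam := by linarith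
      have hD : 0 < (t - lam) + |lam - s| + 1 := by positivity
      refine ⟨(t - lam) / ((t - lam) + |lam - s| + 1), by positivity, ?_, ?_⟩
      · rw [div_le_one hD]
        linarith [abs_nonneg (lam - s)]
      · have h : (t - lam) / ((t - lam) + |lam - s| + 1) * s
            + (1 - (t - lam) / ((t - lam) + |lam - s| + 1)) * t - lam
            = (t - lam) * (|lam - s| + 1 - (lam - s)) / ((t - lam) + |lam - s| + 1) := by
          field_simp
          ring
        have h2 : 0 < (t - lam) * (|lam - s| + 1 - (lam - s)) /
            ((t - lam) + |lam - s| + 1) :=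
          div_pos (mul_pos hd (by linarith [le_abs_self (lam - s)])) hD
        linarith
    refine key _ (hconv x hx e he0.le he1) ?_
    intro i hi
    simp only [sum_add_distrib, ← mul_sum]
    by_cases hij : i = j
    · subst hij
      exact hej
    · nlinarith [mul_lt_mul_of_pos_left (hxB i (mem_erase.2 ⟨hij, hi⟩)) he0,
        mul_le_mul_of_nonneg_left (hyB i hi) (sub_nonneg.2 he1)]
  · refine key y hy ?_
    intro i hi
    by_cases hij : i = j
    · subst hij
      exact hjy
    · exact absurd ⟨i, mem_erase.2 ⟨hij, hi⟩⟩ hE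
end
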